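/- Ultraspherical interpolation inequality, subcritical range: let d ≥ 1 and let p ∈ [1, 2). Then for every continuously differentiable function f on [−1,1], ∫_{−1}^{1} |f'(x)|² ν(x) dν_d(x) ≥ d ( ‖f‖_2² − ‖f‖_p² ) / (2 − p), where ‖f‖_q = ( ∫_{−1}^{1} |f|^q dν_d )^{1/q}. -/

import Mathlib

open MeasureTheory Real

noncomputable section

/-- The normalization constant `Z_d = √π Γ(d/2)/Γ((d+1)/2)`. -/
def Zd (d : ℕ) : ℝ := Real.sqrt π * Real.Gamma ((d : ℝ) / 2) / Real.Gamma (((d : ℝ) + 1) / 2)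

/-- The probability measure `dν_d(x) = Z_d⁻¹ (1 − x²)^{d/2−1} dx` on `(−1,1)`. -/
def nuMeas (d : ℕ) : Measure ℝ :=
  (volume.restrict (Set.Ioo (-1 : ℝ) 1)).withDensity
    fun x => ENNReal.ofReal ((1 - x ^ 2) ^ ((d : ℝ) / 2 - 1) / Zd d)

open Set Filter Topology Polynomial

def wt (d : ℕ) (x : ℝ) : ℝ := (1 - x ^ 2) ^ ((d : ℝ) / 2 - 1)

lemma one_sub_sq_pos {x : ℝ} (hx : x ∈ Ioo (-1 : ℝ) 1) : 0 < 1 - x ^ 2 := by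
  nlinarith [hx.1, hx.2]

lemma wt_pos (d : ℕ) {x : ℝ} (hx : x ∈ Ioo (-1 : ℝ) 1) : 0 < wt d x :=
  Real.rpow_pos_of_pos (one_sub_sq_pos hx) _

lemma wt_measurable (d : ℕ) : Measurable (wt d) := by
  unfold wt; fun_prop

lemma wt_add_two (d : ℕ) {x : ℝ} (hx : x ∈ Ioo (-1 : ℝ) 1) :
    wt (d + 2) x = (1 - x ^ 2) * wt d x := by
  unfold wt
  have : (((d + 2 : ℕ) : ℝ) / 2 - 1) = ((d : ℝ) / 2 - 1) + 1 := by push_cast; ring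
  rw [this, Real.rpow_add_one (one_sub_sq_pos hx).ne', mul_comm]

lemma wt_one {x : ℝ} : wt 1 x = 1 / √(1 - x ^ 2) := by
  by_cases hx : 0 ≤ 1 - x ^ 2
  · unfold wt
    rw [Real.sqrt_eq_rpow, one_div, ← Real.rpow_neg hx]
    norm_num
  · push Not at hx
    unfold wt
    rw [Real.sqrt_eq_zero_of_nonpos hx.le, Real.rpow_def_of_neg hx]
    have : ((((1 : ℕ) : ℝ) / 2 - 1) * π) = - (π / 2) := by push_cast; ring
    rw [this, Real.cos_neg, Real.cos_pi_div_two]; simp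

lemma wt_one_integrable : IntervalIntegrable (wt 1) volume (-1) 1 := by
  have := intervalIntegral.intervalIntegrable_deriv_of_nonneg (a := -1) (b := 1) (g := Real.arcsin) (g' := wt 1)
    Real.continuous_arcsin.continuousOn
    (by
      intro x hx
      norm_num at hx
      rw [wt_one]
      exact Real.hasDerivAt_arcsin hx.1.ne' hx.2.ne)
    (by
      intro x hx
      norm_num at hx
      exact (wt_pos 1 hx).le)
  exact this

lemma wt_one_integral : ∫ x in (-1 : ℝ)..1, wt 1 x = π := by
  rw [intervalIntegral.integral_eq_sub_of_hasDerivAt_of_le (by norm_num)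
    Real.continuous_arcsin.continuousOn _ wt_one_integrable]
  · rw [Real.arcsin_neg, Real.arcsin_one]; ring
  · intro x hx
    rw [wt_one]
    exact Real.hasDerivAt_arcsin hx.1.ne' hx.2.ne

lemma wt_integrable (d : ℕ) (hd : 1 ≤ d) : IntervalIntegrable (wt d) volume (-1) 1 := by
  rcases Nat.lt_or_ge d 2 with h | h
  · obtain rfl : d = 1 := by omega
    exact wt_one_integrable
  · apply Continuous.intervalIntegrable
    unfold wt
    apply Continuous.rpow_const (by fun_prop)
    intro x; right
    have : (2 : ℝ) ≤ d := by exact_mod_cast h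
    linarith

lemma wt_mul_integrable (d : ℕ) (hd : 1 ≤ d) {F : ℝ → ℝ} (hF : ContinuousOn F (Icc (-1) 1)) :
    IntervalIntegrable (fun x => F x * wt d x) volume (-1) 1 := by
  apply (wt_integrable d hd).continuousOn_mul
  rwa [uIcc_of_le (by norm_num)]

lemma wt_ibp (d : ℕ) (hd : 1 ≤ d) {A A' : ℝ → ℝ} (hA : ContinuousOn A (Icc (-1) 1))
    (hA' : ContinuousOn A' (Icc (-1) 1)) (h : ∀ x ∈ Ioo (-1 : ℝ) 1, HasDerivAt A (A' x) x) :
    ∫ x in (-1 : ℝ)..1, ((1 - x ^ 2) * A' x - d * x * A x) * wt d x = 0 := by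
  have hd0 : (1 : ℝ) ≤ d := by exact_mod_cast hd
  have key := intervalIntegral.integral_eq_sub_of_hasDerivAt_of_le (a := -1) (b := 1)
    (f := fun x => (1 - x ^ 2) ^ ((d : ℝ) / 2) * A x)
    (f' := fun x => ((1 - x ^ 2) * A' x - d * x * A x) * wt d x) (by norm_num) ?_ ?_ ?_
  · rw [key]
    have : (d : ℝ) / 2 ≠ 0 := by positivity
    norm_num [Real.zero_rpow this]
  · apply ContinuousOn.mul _ hA
    apply Continuous.continuousOn
    apply Continuous.rpow_const (by fun_prop)
    intro x; right; positivity
  · intro x hx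
    have hp := one_sub_sq_pos hx
    have h1 : HasDerivAt (fun x : ℝ => 1 - x ^ 2) (- (2 * x)) x := by
      simpa using ((hasDerivAt_pow 2 x).const_sub 1)
    have h2 := (h1.rpow_const (p := (d : ℝ) / 2) (Or.inl hp.ne')).mul (h x hx)
    refine h2.congr_deriv ?_
    have h3 : (1 - x ^ 2) ^ ((d : ℝ) / 2) = (1 - x ^ 2) * wt d x := by
      unfold wt
      rw [Real.rpow_sub_one hp.ne']; field_simp
    rw [h3]
    unfold wt
    ring
  · apply wt_mul_integrable d hd
    fun_prop

lemma wt_integral (d : ℕ) : ∫ x in (-1 : ℝ)..1, wt (d + 1) x = Zd (d + 1) := by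
  induction d using Nat.twoStepInduction with
  | zero =>
    rw [wt_one_integral]
    unfold Zd
    norm_num [Real.Gamma_one_half_eq]
    exact (Real.mul_self_sqrt Real.pi_pos.le).symm
  | one =>
    have h1 : ∀ x, wt (1 + 1) x = 1 := by intro x; unfold wt; norm_num
    simp only [h1]
    unfold Zd
    have : Real.Gamma (3 / 2) = √π / 2 := by
      have := Real.Gamma_add_one (s := 1 / 2) (by norm_num)
      rw [Real.Gamma_one_half_eq] at this
      norm_num at this ⊢
      rw [this]; ring
    norm_num
    rw [this]
    have : √π ≠ 0 := by positivity
    field_simp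
  | more n ih _ =>
    have hib := wt_ibp (n + 1) (by omega) (A := fun x => x) (A' := fun _ => 1) (by fun_prop) (by fun_prop)
      (fun x _ => hasDerivAt_id x)
    have e1 : ∫ x in (-1 : ℝ)..1, ((1 - x ^ 2) * 1 - ((n + 1 : ℕ) : ℝ) * x * x) * wt (n + 1) x
        = ∫ x in (-1 : ℝ)..1, (((n : ℝ) + 2) * wt (n + 1 + 2) x - (n + 1) * wt (n + 1) x) := by
      apply intervalIntegral.integral_congr_Ioo_of_le (by norm_num)
      intro x hx
      simp only
      rw [wt_add_two _ hx]
      push_cast; ring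
    rw [e1, intervalIntegral.integral_sub ((wt_integrable _ (by omega)).const_mul _)
      ((wt_integrable _ (by omega)).const_mul _), intervalIntegral.integral_const_mul,
      intervalIntegral.integral_const_mul, ih] at hib
    have hz : ((n : ℝ) + 2) * Zd (n + 1 + 2) = (n + 1) * Zd (n + 1) := by
      unfold Zd
      have a1 : (((n + 1 + 2 : ℕ) : ℝ) / 2) = ((n + 1 : ℕ) : ℝ) / 2 + 1 := by push_cast; ring
      have a2 : ((((n + 1 + 2 : ℕ) : ℝ) + 1) / 2) = (((n + 1 : ℕ) : ℝ) + 1) / 2 + 1 := by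
        push_cast; ring
      rw [a1, a2, Real.Gamma_add_one (by positivity), Real.Gamma_add_one (by positivity)]
      have : Real.Gamma ((((n + 1 : ℕ) : ℝ) + 1) / 2) ≠ 0 := (Real.Gamma_pos_of_pos (by positivity)).ne'
      field_simp
      push_cast; ring
    have hn : ((n : ℝ) + 2) ≠ 0 := by positivity
    apply mul_left_cancel₀ hn
    rw [show n + 2 + 1 = n + 1 + 2 from rfl, hz]
    linarith

lemma wt_integral' (d : ℕ) (hd : 1 ≤ d) : ∫ x in (-1 : ℝ)..1, wt d x = Zd d := by
  obtain ⟨n, rfl⟩ : ∃ n, d = n + 1 := ⟨d - 1, by omega⟩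
  exact wt_integral n

lemma Zd_pos (d : ℕ) (hd : 1 ≤ d) : 0 < Zd d := by
  have : (1 : ℝ) ≤ d := by exact_mod_cast hd
  unfold Zd
  have h1 := Real.Gamma_pos_of_pos (s := (d : ℝ) / 2) (by positivity)
  have h2 := Real.Gamma_pos_of_pos (s := ((d : ℝ) + 1) / 2) (by positivity)
  positivity

lemma integral_nuMeas (d : ℕ) (hd : 1 ≤ d) (F : ℝ → ℝ) :
    ∫ x, F x ∂(nuMeas d) = (Zd d)⁻¹ * ∫ x in (-1 : ℝ)..1, F x * wt d x := by
  unfold nuMeas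
  rw [integral_withDensity_eq_integral_toReal_smul₀]
  · rw [intervalIntegral.integral_of_le (by norm_num), integral_Ioc_eq_integral_Ioo,
      ← integral_const_mul]
    apply setIntegral_congr_fun measurableSet_Ioo
    intro x hx
    have := wt_pos d hx
    have hz := Zd_pos d hd
    simp only [smul_eq_mul]
    change (ENNReal.ofReal (wt d x / Zd d)).toReal * _ = _
    rw [ENNReal.toReal_ofReal (by positivity)]
    ring
  · have : Measurable (fun x => ENNReal.ofReal (wt d x / Zd d)) :=
      ((wt_measurable d).div_const _).ennreal_ofReal
    exact this.aemeasurable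
  · exact ae_of_all _ fun x => ENNReal.ofReal_lt_top

lemma nuMeas_prob (d : ℕ) (hd : 1 ≤ d) : IsProbabilityMeasure (nuMeas d) := by
  constructor
  unfold nuMeas
  rw [withDensity_apply _ MeasurableSet.univ, Measure.restrict_univ]
  have hz := Zd_pos d hd
  have hi : IntegrableOn (fun x => wt d x / Zd d) (Ioo (-1) 1) volume := by
    have := (wt_integrable d hd).div_const (Zd d)
    rw [intervalIntegrable_iff_integrableOn_Ioo_of_le (by norm_num)] at this
    exact this
  have := ofReal_integral_eq_lintegral_ofReal hi (by
    filter_upwards [ae_restrict_mem measurableSet_Ioo] with x hx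
    have := wt_pos d hx
    simp only [Pi.zero_apply]; positivity)
  change ∫⁻ x in Ioo (-1 : ℝ) 1, ENNReal.ofReal (wt d x / Zd d) = 1
  rw [← this, ← integral_Ioc_eq_integral_Ioo, ← intervalIntegral.integral_of_le (by norm_num),
    intervalIntegral.integral_div, wt_integral' d hd, div_self hz.ne', ENNReal.ofReal_one]

lemma nuMeas_ae (d : ℕ) : ∀ᵐ x ∂(nuMeas d), x ∈ Ioo (-1 : ℝ) 1 := by
  unfold nuMeas
  exact (withDensity_absolutelyContinuous _ _).ae_le (ae_restrict_mem measurableSet_Ioo)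

lemma nuMeas_aesm (d : ℕ) {F : ℝ → ℝ} (hF : ContinuousOn F (Icc (-1) 1)) :
    AEStronglyMeasurable F (nuMeas d) := by
  have h1 : AEStronglyMeasurable F (volume.restrict (Ioo (-1 : ℝ) 1)) :=
    (hF.mono Ioo_subset_Icc_self).aestronglyMeasurable measurableSet_Ioo
  exact h1.mono_ac (withDensity_absolutelyContinuous _ _)

lemma nuMeas_integrable (d : ℕ) (hd : 1 ≤ d) {F : ℝ → ℝ} (hF : ContinuousOn F (Icc (-1) 1)) :
    Integrable F (nuMeas d) := by
  have := nuMeas_prob d hd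
  obtain ⟨C, hC⟩ := isCompact_Icc.exists_bound_of_continuousOn hF
  apply Integrable.of_bound (nuMeas_aesm d hF) C
  filter_upwards [nuMeas_ae d] with x hx
  exact hC x (Ioo_subset_Icc_self hx)

lemma nuMeas_ibp (d : ℕ) (hd : 1 ≤ d) {A A' : ℝ → ℝ} (hA : ContinuousOn A (Icc (-1) 1))
    (hA' : ContinuousOn A' (Icc (-1) 1)) (h : ∀ x ∈ Ioo (-1 : ℝ) 1, HasDerivAt A (A' x) x) :
    ∫ x, ((1 - x ^ 2) * A' x - d * x * A x) ∂(nuMeas d) = 0 := by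
  rw [integral_nuMeas d hd, wt_ibp d hd hA hA' h, mul_zero]

def Lop (d : ℕ) : ℝ[X] →ₗ[ℝ] ℝ[X] :=
  LinearMap.mulLeft ℝ (1 - X ^ 2 : ℝ[X]) ∘ₗ derivative ∘ₗ derivative
    - (d : ℝ) • (LinearMap.mulLeft ℝ (X : ℝ[X]) ∘ₗ derivative)

lemma Lop_apply (d : ℕ) (P : ℝ[X]) : Lop d P =
    (1 - X ^ 2) * derivative (derivative P) - (d : ℝ) • (X * derivative P) := by
  simp [Lop]

def lam (d k : ℕ) : ℝ := k * (k + d - 1)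

lemma lam_zero (d : ℕ) : lam d 0 = 0 := by simp [lam]

lemma lam_strict (d : ℕ) (hd : 1 ≤ d) {j k : ℕ} (h : j < k) : lam d j < lam d k := by
  have h1 : (j : ℝ) < k := by exact_mod_cast h
  have h2 : (1 : ℝ) ≤ d := by exact_mod_cast hd
  have h3 : (0 : ℝ) ≤ j := by positivity
  unfold lam
  nlinarith

def Decomp (d N : ℕ) (P : ℝ[X]) (h : ℕ → ℝ[X]) : Prop :=
  (∀ k, Lop d (h k) = (-lam d k) • h k) ∧ (∃ c, h 0 = C c) ∧ (∀ k, N ≤ k → h k = 0) ∧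
    P = ∑ k ∈ Finset.range N, h k

lemma decomp_pow (d : ℕ) (hd : 1 ≤ d) (n : ℕ) : ∃ h, Decomp d (n + 1) (X ^ n) h := by
  induction n using Nat.twoStepInduction with
  | zero =>
    refine ⟨fun k => if k = 0 then 1 else 0, ?_, ⟨1, by simp⟩, ?_, by simp⟩
    · intro k
      by_cases hk : k = 0
      · simp [hk, lam_zero, Lop_apply]
      · simp [hk]
    · intro k hk
      have : k ≠ 0 := by omega
      simp [this]
  | one =>
    refine ⟨fun k => if k = 1 then X else 0, ?_, ⟨0, by simp⟩, ?_, ?_⟩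
    · intro k
      by_cases hk : k = 1
      · simp [hk, lam, Lop_apply]
      · simp [hk]
    · intro k hk
      have : k ≠ 1 := by omega
      simp [this]
    · simp
  | more n ih _ =>
    obtain ⟨h, he, ⟨c0, hc0⟩, hz, hs⟩ := ih
    set μ := lam d (n + 2) with hμ
    set r : ℝ[X] := ∑ j ∈ Finset.range (n + 1), ((((n : ℝ) + 2) * (n + 1)) / (μ - lam d j)) • h j with hr
    have hne : ∀ j ∈ Finset.range (n + 1), μ - lam d j ≠ 0 := by
      intro j hj
      rw [Finset.mem_range] at hj
      have := lam_strict d hd (show j < n + 2 by omega)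
      exact (sub_pos.2 this).ne'
    have hLr : Lop d r + μ • r = (((n : ℝ) + 2) * (n + 1)) • (X ^ n : ℝ[X]) := by
      rw [hs, hr, map_sum, Finset.smul_sum, Finset.smul_sum, ← Finset.sum_add_distrib]
      apply Finset.sum_congr rfl
      intro j hj
      rw [map_smul, he, smul_smul, smul_smul, ← add_smul]
      congr 1
      have := hne j hj
      field_simp
      ring
    have hLX : Lop d (X ^ (n + 2)) + μ • X ^ (n + 2) = (((n : ℝ) + 2) * (n + 1)) • (X ^ n : ℝ[X]) := by
      rw [Lop_apply, hμ, lam]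
      simp only [derivative_X_pow, derivative_mul, derivative_C, Nat.add_sub_cancel,
        show n + 2 - 1 = n + 1 by omega, smul_eq_C_mul]
      simp
      have C2 : (C 2 : ℝ[X]) = 2 := rfl
      rw [C2]
      ring
    refine ⟨fun k => if k = n + 2 then X ^ (n + 2) - r else
      ((((n : ℝ) + 2) * (n + 1)) / (μ - lam d k)) • h k, ?_, ?_, ?_, ?_⟩
    · intro k
      by_cases hk : k = n + 2
      · simp only [hk, if_true, map_sub]
        rw [← hμ, neg_smul, smul_sub]
        linear_combination hLX - hLr
      · simp only [hk, if_false, map_smul, he]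
        rw [smul_comm]
    · refine ⟨(((n : ℝ) + 2) * (n + 1)) / (μ - lam d 0) * c0, ?_⟩
      simp [hc0, smul_eq_C_mul]
    · intro k hk
      have : k ≠ n + 2 := by omega
      simp only [this, if_false]
      rw [hz k (by omega), smul_zero]
    · rw [Finset.sum_range_succ, Finset.sum_range_succ]
      simp only [if_true]
      rw [if_neg (by omega), hz (n + 1) le_rfl, smul_zero]
      have : ∑ x ∈ Finset.range (n + 1), (if x = n + 2 then X ^ (n + 2) - r else
          ((((n : ℝ) + 2) * (n + 1)) / (μ - lam d x)) • h x) = r := by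
        rw [hr]
        apply Finset.sum_congr rfl
        intro j hj
        rw [Finset.mem_range] at hj
        rw [if_neg (by omega)]
      rw [this]
      ring

lemma decomp_mono {d N M : ℕ} {P : ℝ[X]} {h : ℕ → ℝ[X]} (hNM : N ≤ M) (H : Decomp d N P h) :
    Decomp d M P h := by
  obtain ⟨he, hc, hz, hs⟩ := H
  refine ⟨he, hc, fun k hk => hz k (by omega), ?_⟩
  rw [hs]
  apply Finset.sum_subset (Finset.range_mono hNM)
  intro x _ hx
  rw [Finset.mem_range] at hx
  exact hz x (by omega)

lemma decomp_exists (d : ℕ) (hd : 1 ≤ d) (P : ℝ[X]) : ∃ N h, Decomp d N P h := by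
  induction P using Polynomial.induction_on' with
  | add p q hp hq =>
    obtain ⟨N, h, H⟩ := hp
    obtain ⟨M, g, G⟩ := hq
    have H' := decomp_mono (le_max_left N M) H
    have G' := decomp_mono (le_max_right N M) G
    obtain ⟨he, ⟨c, hc⟩, hz, hs⟩ := H'
    obtain ⟨ge, ⟨c', gc⟩, gz, gs⟩ := G'
    refine ⟨max N M, fun k => h k + g k, ?_, ⟨c + c', ?_⟩, ?_, ?_⟩
    · intro k
      simp only
      rw [map_add, he, ge, smul_add]
    · simp only
      rw [hc, gc, C_add]
    · intro k hk
      simp only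
      rw [hz k hk, gz k hk, add_zero]
    · rw [Finset.sum_add_distrib, ← hs, ← gs]
  | monomial n a =>
    obtain ⟨h, he, ⟨c, hc⟩, hz, hs⟩ := decomp_pow d hd n
    refine ⟨n + 1, fun k => a • h k, ?_, ⟨a * c, ?_⟩, ?_, ?_⟩
    · intro k
      simp only
      rw [map_smul, he, smul_comm]
    · simp only
      rw [hc, smul_eq_C_mul, C_mul]
    · intro k hk
      simp only
      rw [hz k hk, smul_zero]
    · rw [← Finset.smul_sum, ← hs, ← C_mul_X_pow_eq_monomial, smul_eq_C_mul]

def VV (d N : ℕ) (h : ℕ → ℝ[X]) (t x : ℝ) : ℝ :=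
  ∑ k ∈ Finset.range N, Real.exp (-lam d k * t) * (h k).eval x

lemma VV_continuous (d N : ℕ) (h : ℕ → ℝ[X]) : Continuous (Function.uncurry (VV d N h)) := by
  unfold Function.uncurry VV
  fun_prop

lemma VV_continuous_x (d N : ℕ) (h : ℕ → ℝ[X]) (t : ℝ) : Continuous (VV d N h t) := by
  unfold VV
  fun_prop

lemma VV_hasDerivAt_x (d N : ℕ) (h : ℕ → ℝ[X]) (t x : ℝ) :
    HasDerivAt (VV d N h t) (VV d N (fun k => derivative (h k)) t x) x := by
  unfold VV
  apply HasDerivAt.fun_sum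
  intro k _
  exact ((h k).hasDerivAt x).const_mul _

lemma VV_hasDerivAt_t (d N : ℕ) (h : ℕ → ℝ[X]) (t x : ℝ) :
    HasDerivAt (fun t => VV d N h t x) (VV d N (fun k => (-lam d k) • h k) t x) t := by
  unfold VV
  apply HasDerivAt.fun_sum
  intro k _
  have h1 : HasDerivAt (fun t : ℝ => -lam d k * t) (-lam d k) t := by
    simpa using (hasDerivAt_id t).const_mul (-lam d k)
  refine (h1.exp.mul_const _).congr_deriv ?_
  rw [eval_smul, smul_eq_mul]; ring

lemma VV_L (d N : ℕ) (h : ℕ → ℝ[X]) (he : ∀ k, Lop d (h k) = (-lam d k) • h k) (t x : ℝ) :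
    VV d N (fun k => (-lam d k) • h k) t x =
      (1 - x ^ 2) * VV d N (fun k => derivative (derivative (h k))) t x
        - d * x * VV d N (fun k => derivative (h k)) t x := by
  unfold VV
  rw [Finset.mul_sum, Finset.mul_sum, ← Finset.sum_sub_distrib]
  apply Finset.sum_congr rfl
  intro k _
  beta_reduce
  rw [← he, Lop_apply]
  simp
  ring

lemma VV_L' (d N : ℕ) (h : ℕ → ℝ[X]) (he : ∀ k, Lop d (h k) = (-lam d k) • h k) (t x : ℝ) :
    VV d N (fun k => (-lam d k) • derivative (h k)) t x =
      (1 - x ^ 2) * VV d N (fun k => derivative (derivative (derivative (h k)))) t x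
        - (d + 2) * x * VV d N (fun k => derivative (derivative (h k))) t x
        - d * VV d N (fun k => derivative (h k)) t x := by
  unfold VV
  rw [Finset.mul_sum, Finset.mul_sum, Finset.mul_sum, ← Finset.sum_sub_distrib,
    ← Finset.sum_sub_distrib]
  apply Finset.sum_congr rfl
  intro k _
  beta_reduce
  rw [← derivative_smul, ← he, Lop_apply]
  simp
  ring

lemma deriv_nonpos_of_left_min {φ : ℝ → ℝ} {c a y : ℝ} (hφ : HasDerivAt φ c y) (ha : a < y)
    (hm : ∀ z ∈ Icc a y, φ y ≤ φ z) : c ≤ 0 := by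
  have h1 := (hasDerivWithinAt_iff_tendsto_slope' (s := Iio y) (by simp)).1 hφ.hasDerivWithinAt
  apply le_of_tendsto h1
  filter_upwards [Ioo_mem_nhdsLT ha] with z hz
  rw [slope_def_field]
  apply div_nonpos_of_nonneg_of_nonpos
  · linarith [hm z ⟨hz.1.le, hz.2.le⟩]
  · linarith [hz.2]

lemma deriv_nonneg_of_right_min {φ : ℝ → ℝ} {c b y : ℝ} (hφ : HasDerivAt φ c y) (hb : y < b)
    (hm : ∀ z ∈ Icc y b, φ y ≤ φ z) : 0 ≤ c := by
  have h1 := (hasDerivWithinAt_iff_tendsto_slope' (s := Ioi y) (by simp)).1 hφ.hasDerivWithinAt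
  apply ge_of_tendsto h1
  filter_upwards [Ioo_mem_nhdsGT hb] with z hz
  rw [slope_def_field]
  apply div_nonneg
  · linarith [hm z ⟨hz.1.le, hz.2.le⟩]
  · linarith [hz.1]

lemma second_deriv_nonneg {φ φ' φ'' : ℝ → ℝ} {y b : ℝ} (h1 : ∀ x, HasDerivAt φ (φ' x) x)
    (h2 : ∀ x, HasDerivAt φ' (φ'' x) x) (hc : Continuous φ'') (hy : φ' y = 0) (hb : y < b)
    (hm : ∀ z ∈ Icc y b, φ y ≤ φ z) : 0 ≤ φ'' y := by
  by_contra hneg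
  push Not at hneg
  have hev : ∀ᶠ x in 𝓝 y, φ'' x < 0 := hc.continuousAt.eventually_lt continuousAt_const hneg
  obtain ⟨δ, hδ, hball⟩ := Metric.eventually_nhds_iff.1 hev
  set e := min (y + δ / 2) b with he
  have hye : y < e := lt_min (by linarith) hb
  have hlt : ∀ x ∈ Icc y e, φ'' x < 0 := by
    intro x hx
    apply hball
    rw [Real.dist_eq, abs_lt]
    have := min_le_left (y + δ / 2) b
    constructor <;> linarith [hx.1, hx.2]
  have ha' : StrictAntiOn φ' (Icc y e) := by
    apply strictAntiOn_of_deriv_neg (convex_Icc _ _)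
    · exact fun x _ => (h2 x).continuousAt.continuousWithinAt
    · intro x hx
      rw [(h2 x).deriv]
      exact hlt x (interior_subset hx)
  have ha : StrictAntiOn φ (Icc y e) := by
    apply strictAntiOn_of_deriv_neg (convex_Icc _ _)
    · exact fun x _ => (h1 x).continuousAt.continuousWithinAt
    · intro x hx
      rw [(h1 x).deriv, ← hy]
      rw [interior_Icc] at hx
      exact ha' ⟨le_rfl, hye.le⟩ ⟨hx.1.le, hx.2.le⟩ hx.1
  have := ha ⟨le_rfl, hye.le⟩ ⟨hye.le, le_rfl⟩ hye
  have := hm e ⟨hye.le, min_le_right _ _⟩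
  linarith

lemma L_nonneg_at_min {φ φ' φ'' : ℝ → ℝ} {y : ℝ} (d : ℕ) (h1 : ∀ x, HasDerivAt φ (φ' x) x)
    (h2 : ∀ x, HasDerivAt φ' (φ'' x) x) (hc : Continuous φ'') (hy : y ∈ Icc (-1 : ℝ) 1)
    (hm : ∀ z ∈ Icc (-1 : ℝ) 1, φ y ≤ φ z) : 0 ≤ (1 - y ^ 2) * φ'' y - d * y * φ' y := by
  have hd : (0 : ℝ) ≤ d := by positivity
  have hr : y < 1 → 0 ≤ φ' y := fun h => deriv_nonneg_of_right_min (h1 y) h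
    fun z hz => hm z ⟨hy.1.trans hz.1, hz.2⟩
  have hl : -1 < y → φ' y ≤ 0 := fun h => deriv_nonpos_of_left_min (h1 y) h
    fun z hz => hm z ⟨hz.1, hz.2.trans hy.2⟩
  rcases eq_or_lt_of_le hy.1 with e | e
  · have := hr (by linarith)
    rw [← e] at this ⊢
    nlinarith [mul_nonneg hd this]
  · rcases eq_or_lt_of_le hy.2 with e' | e'
    · have := hl e
      rw [e'] at this ⊢
      nlinarith [mul_nonneg hd (neg_nonneg.2 this)]
    · have h0 : φ' y = 0 := le_antisymm (hl e) (hr e')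
      have := second_deriv_nonneg h1 h2 hc h0 e' fun z hz => hm z ⟨hy.1.trans hz.1, hz.2⟩
      rw [h0]
      have := mul_nonneg (one_sub_sq_pos ⟨e, e'⟩).le this
      linarith

lemma VV_min (d N : ℕ) (h : ℕ → ℝ[X]) (he : ∀ k, Lop d (h k) = (-lam d k) • h k) {m : ℝ}
    (hm : ∀ x ∈ Icc (-1 : ℝ) 1, m ≤ VV d N h 0 x) {t x : ℝ} (ht : 0 ≤ t)
    (hx : x ∈ Icc (-1 : ℝ) 1) : m ≤ VV d N h t x := by
  rcases eq_or_lt_of_le ht with rfl | ht0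
  · exact hm x hx
  have key : ∀ ε > 0, m ≤ VV d N h t x + ε * t := by
    intro ε hε
    have hcont : Continuous (fun z : ℝ × ℝ => VV d N h z.1 z.2 + ε * z.1) :=
      (VV_continuous d N h).add (by fun_prop)
    obtain ⟨⟨s, y⟩, ⟨hs, hy⟩, hmin⟩ := (isCompact_Icc.prod isCompact_Icc :
      IsCompact (Icc (0 : ℝ) t ×ˢ Icc (-1 : ℝ) 1)).exists_isMinOn
      ⟨(0, 0), ⟨⟨le_rfl, ht⟩, by norm_num⟩⟩ hcont.continuousOn
    have hmin' : ∀ s' ∈ Icc (0 : ℝ) t, ∀ y' ∈ Icc (-1 : ℝ) 1,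
        VV d N h s y + ε * s ≤ VV d N h s' y' + ε * s' := fun s' hs' y' hy' =>
      hmin (show (s', y') ∈ Icc (0 : ℝ) t ×ˢ Icc (-1 : ℝ) 1 from ⟨hs', hy'⟩)
    simp only at hs hy
    rcases eq_or_lt_of_le hs.1 with e | e
    · have h1 := hmin' t ⟨ht, le_rfl⟩ x hx
      rw [← e] at h1
      have := hm y hy
      linarith
    · exfalso
      have hder := (VV_hasDerivAt_t d N h s y).add ((hasDerivAt_id s).const_mul ε)
      have h1 := deriv_nonpos_of_left_min hder e (by
        intro z hz
        simpa using hmin' z ⟨hz.1, hz.2.trans hs.2⟩ y hy)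
      have h2 := L_nonneg_at_min d (VV_hasDerivAt_x d N h s)
        (VV_hasDerivAt_x d N (fun k => derivative (h k)) s) (VV_continuous_x _ _ _ _) hy
        (fun z hz => by linarith [hmin' s hs z hz])
      rw [VV_L d N h he] at h1
      linarith
  by_contra hlt
  push Not at hlt
  have := key ((m - VV d N h t x) / (2 * t)) (by apply div_pos <;> linarith)
  have e : (m - VV d N h t x) / (2 * t) * t = (m - VV d N h t x) / 2 := by field_simp
  rw [e] at this
  linarith

lemma hasDerivAt_int (d : ℕ) (hd : 1 ≤ d) (F F' : ℝ → ℝ → ℝ) {a b t₀ : ℝ} (ht₀ : t₀ ∈ Ioo a b)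
    (hF : ∀ t ∈ Icc a b, ContinuousOn (F t) (Icc (-1) 1))
    (hF' : ContinuousOn (Function.uncurry F') (Icc a b ×ˢ Icc (-1) 1))
    (h : ∀ t ∈ Ioo a b, ∀ x ∈ Icc (-1 : ℝ) 1, HasDerivAt (fun t => F t x) (F' t x) t) :
    HasDerivAt (fun t => ∫ x, F t x ∂(nuMeas d)) (∫ x, F' t₀ x ∂(nuMeas d)) t₀ := by
  have := nuMeas_prob d hd
  obtain ⟨C, hC⟩ := (isCompact_Icc.prod isCompact_Icc).exists_bound_of_continuousOn hF'
  have hsub : Ioo a b ∈ 𝓝 t₀ := Ioo_mem_nhds ht₀.1 ht₀.2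
  refine (hasDerivAt_integral_of_dominated_loc_of_deriv_le (bound := fun _ => C) hsub ?_ ?_ ?_ ?_ ?_ ?_).2
  · filter_upwards [hsub] with t ht
    exact nuMeas_aesm d (hF t (Ioo_subset_Icc_self ht))
  · exact nuMeas_integrable d hd (hF t₀ (Ioo_subset_Icc_self ht₀))
  · apply nuMeas_aesm d
    exact hF'.comp (f := fun x => (t₀, x)) (by fun_prop) fun x hx => ⟨Ioo_subset_Icc_self ht₀, hx⟩
  · filter_upwards [nuMeas_ae d] with x hx t ht
    exact hC (t, x) ⟨Ioo_subset_Icc_self ht, Ioo_subset_Icc_self hx⟩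
  · exact integrable_const C
  · filter_upwards [nuMeas_ae d] with x hx t ht
    exact h t ht x (Ioo_subset_Icc_self hx)

lemma continuousOn_int (d : ℕ) (hd : 1 ≤ d) (F : ℝ → ℝ → ℝ) {a b : ℝ}
    (hF : ContinuousOn (Function.uncurry F) (Icc a b ×ˢ Icc (-1) 1)) :
    ContinuousOn (fun t => ∫ x, F t x ∂(nuMeas d)) (Icc a b) := by
  have := nuMeas_prob d hd
  obtain ⟨C, hC⟩ := (isCompact_Icc.prod isCompact_Icc).exists_bound_of_continuousOn hF
  apply continuousOn_of_dominated (bound := fun _ => C)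
  · intro t ht
    apply nuMeas_aesm d
    exact hF.comp (f := fun x => (t, x)) (by fun_prop) fun x hx => ⟨ht, hx⟩
  · intro t ht
    filter_upwards [nuMeas_ae d] with x hx
    exact hC (t, x) ⟨ht, Ioo_subset_Icc_self hx⟩
  · exact integrable_const C
  · filter_upwards [nuMeas_ae d] with x hx
    exact hF.comp (f := fun t => (t, x)) (by fun_prop) fun t ht => ⟨ht, Ioo_subset_Icc_self hx⟩

lemma dissip_alg (d a : ℝ) (hd : 1 ≤ d) (ha : -1 ≤ a) (ha0 : a ≤ 0) {U u y z : ℝ} (n : ℝ)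
    (hU : 0 ≤ U) :
    0 ≤ U * n ^ 2 * (2 * z ^ 2 + (a + 3 * (a * d / (d + 2))) * z * y * u
      + (a * d / (d + 2)) * (a - 1) * (y * u) ^ 2) := by
  apply mul_nonneg (by positivity)
  set r := y * u with hr
  have e1 : a + 3 * (a * d / (d + 2)) = a * (4 * d + 2) / (d + 2) := by field_simp; ring
  have e2 : (2 * z ^ 2 + (a + 3 * (a * d / (d + 2))) * z * y * u
      + (a * d / (d + 2)) * (a - 1) * r ^ 2) = 2 * (z + a * (4 * d + 2) / (d + 2) / 4 * r) ^ 2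
      + (-a) * (8 * d * (d + 2) * (1 - a) + a * (4 * d + 2) ^ 2) / (8 * (d + 2) ^ 2) * r ^ 2 := by
    rw [e1, hr]; field_simp; ring
  rw [e2]
  have h3 : 0 ≤ 8 * d * (d + 2) * (1 - a) + a * (4 * d + 2) ^ 2 := by nlinarith
  have h4 : 0 ≤ -a := by linarith
  positivity

set_option maxHeartbeats 1000000 in
lemma fisher_static {d : ℕ} (hd : 1 ≤ d) (a : ℝ) (ha : -1 ≤ a) (ha0 : a ≤ 0)
    {u y z w : ℝ → ℝ} (hx0 : Continuous u) (hx1 : Continuous y) (hx2 : Continuous z)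
    (hx3 : Continuous w) (h1 : ∀ x, HasDerivAt u (y x) x) (h2 : ∀ x, HasDerivAt y (z x) x)
    (h3 : ∀ x, HasDerivAt z (w x) x) (hpos : ∀ x ∈ Icc (-1 : ℝ) 1, 0 < u x) :
    ∫ x, ((((1 - x ^ 2) * z x - d * x * y x) * a * (u x) ^ (a - 1)) * (y x) ^ 2 + (u x) ^ a *
        (2 * y x * ((1 - x ^ 2) * w x - (d + 2) * x * z x - d * y x))) * (1 - x ^ 2) ∂(nuMeas d) ≤
      - (2 * (d : ℝ)) * ∫ x, (u x) ^ a * (y x) ^ 2 * (1 - x ^ 2) ∂(nuMeas d) := by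
  have hr : ∀ s : ℝ, ContinuousOn (fun x => u x ^ s) (Icc (-1) 1) := fun s =>
    hx0.continuousOn.rpow_const fun x hx => Or.inl (hpos x hx).ne'
  have r0 := hr a
  have r1 := hr (a - 1)
  have r2 := hr (a - 1 - 1)
  have hν : ∀ x : ℝ, HasDerivAt (fun x : ℝ => 1 - x ^ 2) (- (2 * x)) x := fun x => by
    simpa using ((hasDerivAt_pow 2 x).const_sub 1)
  obtain ⟨c, hc⟩ : ∃ c : ℝ, c = a * d / (d + 2) := ⟨_, rfl⟩
  have ibp1 := nuMeas_ibp d hd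
    (A := fun x => 2 * (u x ^ a * ((1 - x ^ 2) * (y x *
        z x))))
    (A' := fun x => 2 * ((y x * a * u x ^ (a - 1)) *
      ((1 - x ^ 2) * (y x *
        z x)) +
      u x ^ a * ((-(2 * x)) * (y x *
        z x) + (1 - x ^ 2) *
        (z x *
          z x +
          y x *
          w x))))
    (by fun_prop) (by fun_prop) (by
      intro x hx
      exact ((((h1 x).rpow_const
        (Or.inl (hpos x (Ioo_subset_Icc_self hx)).ne')).mul
        ((hν x).mul ((h2 x).mul (h3 x)))).const_mul 2))
  have ibp2 := nuMeas_ibp d hd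
    (A := fun x => c * (u x ^ (a - 1) * ((1 - x ^ 2) *
      (y x) ^ 3)))
    (A' := fun x => c * ((y x * (a - 1) *
        u x ^ (a - 1 - 1)) * ((1 - x ^ 2) * (y x) ^ 3) +
      u x ^ (a - 1) * ((-(2 * x)) * (y x) ^ 3 +
        (1 - x ^ 2) * (((3 : ℕ) : ℝ) * y x ^ (3 - 1) *
          z x))))
    (by fun_prop) (by fun_prop) (by
      intro x hx
      exact ((((h1 x).rpow_const
        (Or.inl (hpos x (Ioo_subset_Icc_self hx)).ne')).mul
        ((hν x).mul ((h2 x).pow 3))).const_mul c))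
  have tot := congrArg₂ (· + ·) ibp1 ibp2
  simp only [add_zero] at tot
  rw [← integral_add (nuMeas_integrable d hd (by fun_prop)) (nuMeas_integrable d hd (by fun_prop))]
    at tot
  rw [← integral_const_mul, ← sub_nonpos, ← integral_sub (nuMeas_integrable d hd (by fun_prop))
    (nuMeas_integrable d hd (by fun_prop)), ← tot]
  apply integral_mono_ae (nuMeas_integrable d hd (by fun_prop)) (nuMeas_integrable d hd (by fun_prop))
  filter_upwards [nuMeas_ae d] with x hx
  have hu := hpos x (Ioo_subset_Icc_self hx)
  rw [Real.rpow_sub_one hu.ne' (a - 1), Real.rpow_sub_one hu.ne' a]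
  have hU := Real.rpow_nonneg hu.le a
  generalize u x ^ a = U at *
  generalize u x = u1 at *
  generalize y x = y1 at *
  generalize z x = z1 at *
  generalize w x = w1 at *
  have hd1 : (1 : ℝ) ≤ d := by exact_mod_cast hd
  have alg := dissip_alg (d : ℝ) a hd1 ha ha0 (U := U) (u := y1 / u1) (y := y1) (z := z1)
    (1 - x ^ 2) hU
  rw [← hc] at alg
  have hcd : c * (d + 2) = a * d := by rw [hc]; field_simp
  rw [← sub_nonneg]
  refine alg.trans_eq ?_
  simp only [div_eq_mul_inv]
  generalize u1⁻¹ = v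
  push_cast
  linear_combination (U * v * x * (1 - x ^ 2) * y1 ^ 3) * hcd

section flow
variable {d N : ℕ} {h : ℕ → ℝ[X]} {m : ℝ}

/-- entropy derivative -/
lemma entropy_deriv (hd : 1 ≤ d) (he : ∀ k, Lop d (h k) = (-lam d k) • h k) (hm0 : 0 < m)
    (hm : ∀ x ∈ Icc (-1 : ℝ) 1, m ≤ VV d N h 0 x) (q : ℝ) {t : ℝ} (ht : 0 < t) :
    HasDerivAt (fun t => ∫ x, (VV d N h t x) ^ q ∂(nuMeas d))
      (-(q * (q - 1)) * ∫ x, (VV d N h t x) ^ (q - 2) *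
        (VV d N (fun k => derivative (h k)) t x) ^ 2 * (1 - x ^ 2) ∂(nuMeas d)) t := by
  have hpos : ∀ t ≥ 0, ∀ x ∈ Icc (-1 : ℝ) 1, 0 < VV d N h t x := fun t ht x hx =>
    hm0.trans_le (VV_min d N h he hm ht hx)
  have hc0 := VV_continuous d N h
  have hc1 := VV_continuous d N (fun k => derivative (h k))
  have hcL := VV_continuous d N (fun k => (-lam d k) • h k)
  have hx0 := VV_continuous_x d N h t
  have hx1 := VV_continuous_x d N (fun k => derivative (h k)) t
  have hx2 := VV_continuous_x d N (fun k => derivative (derivative (h k))) t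
  have H := hasDerivAt_int d hd (fun t x => (VV d N h t x) ^ q)
    (fun t x => VV d N (fun k => (-lam d k) • h k) t x * q * (VV d N h t x) ^ (q - 1))
    (a := 0) (b := t + 1) (t₀ := t) ⟨ht, by linarith⟩ ?_ ?_ ?_
  · refine H.congr_deriv ?_
    have hr : ∀ s : ℝ, ContinuousOn (fun x => VV d N h t x ^ s) (Icc (-1) 1) := fun s =>
      hx0.continuousOn.rpow_const fun x hx => Or.inl (hpos t ht.le x hx).ne'
    have r1 := hr (q - 1)
    have r2 := hr (q - 1 - 1)
    have r2' := hr (q - 2)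
    have ibp := nuMeas_ibp d hd
      (A := fun x => q * (VV d N h t x ^ (q - 1) * VV d N (fun k => derivative (h k)) t x))
      (A' := fun x => q * (VV d N (fun k => derivative (h k)) t x * (q - 1) * VV d N h t x ^ (q - 1 - 1) *
        VV d N (fun k => derivative (h k)) t x +
        VV d N h t x ^ (q - 1) * VV d N (fun k => derivative (derivative (h k))) t x))
      (by fun_prop) (by fun_prop) (by
        intro x hx
        exact ((((VV_hasDerivAt_x d N h t x).rpow_const
          (Or.inl (hpos t ht.le x (Ioo_subset_Icc_self hx)).ne')).mul
          (VV_hasDerivAt_x d N _ t x)).const_mul q))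
    rw [← integral_const_mul, ← sub_eq_zero, ← integral_sub, ← ibp]
    · apply integral_congr_ae
      filter_upwards [nuMeas_ae d] with x hx
      rw [VV_L d N h he, show q - 1 - 1 = q - 2 by ring]
      ring
    · apply nuMeas_integrable d hd
      have := VV_continuous_x d N (fun k => (-lam d k) • h k) t
      fun_prop
    · apply nuMeas_integrable d hd
      fun_prop
  · intro s hs
    exact (VV_continuous_x d N h s).continuousOn.rpow_const fun x hx => Or.inl (hpos s hs.1 x hx).ne'
  · have : ContinuousOn (fun z : ℝ × ℝ => (Function.uncurry (VV d N h) z) ^ (q - 1))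
        (Icc 0 (t + 1) ×ˢ Icc (-1) 1) :=
      hc0.continuousOn.rpow_const fun z hz => Or.inl (hpos z.1 hz.1.1 z.2 hz.2).ne'
    exact (hcL.continuousOn.mul continuousOn_const).mul this
  · intro s hs x hx
    exact (VV_hasDerivAt_t d N h s x).rpow_const (Or.inl (hpos s hs.1.le x hx).ne')

set_option maxHeartbeats 1000000 in
lemma fisher_deriv (hd : 1 ≤ d) (he : ∀ k, Lop d (h k) = (-lam d k) • h k) (hm0 : 0 < m)
    (hm : ∀ x ∈ Icc (-1 : ℝ) 1, m ≤ VV d N h 0 x) (a : ℝ) (ha : -1 ≤ a) (ha0 : a ≤ 0)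
    {t : ℝ} (ht : 0 < t) : ∃ D : ℝ,
    HasDerivAt (fun t => ∫ x, (VV d N h t x) ^ a *
        (VV d N (fun k => derivative (h k)) t x) ^ 2 * (1 - x ^ 2) ∂(nuMeas d)) D t ∧
      D ≤ - (2 * d) * ∫ x, (VV d N h t x) ^ a *
        (VV d N (fun k => derivative (h k)) t x) ^ 2 * (1 - x ^ 2) ∂(nuMeas d) := by
  have hpos : ∀ t ≥ 0, ∀ x ∈ Icc (-1 : ℝ) 1, 0 < VV d N h t x := fun t ht x hx =>
    hm0.trans_le (VV_min d N h he hm ht hx)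
  have hc0 := VV_continuous d N h
  have hc1 := VV_continuous d N (fun k => derivative (h k))
  have hcL := VV_continuous d N (fun k => (-lam d k) • h k)
  have hcL1 := VV_continuous d N (fun k => (-lam d k) • derivative (h k))
  have hx0 := VV_continuous_x d N h t
  have hx1 := VV_continuous_x d N (fun k => derivative (h k)) t
  have hx2 := VV_continuous_x d N (fun k => derivative (derivative (h k))) t
  have hx3 := VV_continuous_x d N (fun k => derivative (derivative (derivative (h k)))) t
  have hxL := VV_continuous_x d N (fun k => (-lam d k) • h k) t
  have hxL1 := VV_continuous_x d N (fun k => (-lam d k) • derivative (h k)) t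
  have H := hasDerivAt_int d hd (fun t x => (VV d N h t x) ^ a *
        (VV d N (fun k => derivative (h k)) t x) ^ 2 * (1 - x ^ 2))
    (fun t x => ((VV d N (fun k => (-lam d k) • h k) t x * a * (VV d N h t x) ^ (a - 1)) *
        (VV d N (fun k => derivative (h k)) t x) ^ 2 + (VV d N h t x) ^ a *
        (2 * VV d N (fun k => derivative (h k)) t x *
          VV d N (fun k => (-lam d k) • derivative (h k)) t x)) * (1 - x ^ 2))
    (a := 0) (b := t + 1) (t₀ := t) ⟨ht, by linarith⟩ ?_ ?_ ?_
  · refine ⟨_, H, ?_⟩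
    simp only [VV_L d N h he, VV_L' d N h he]
    exact fisher_static hd a ha ha0 hx0 hx1 hx2 hx3 (VV_hasDerivAt_x d N _ t)
      (VV_hasDerivAt_x d N _ t) (VV_hasDerivAt_x d N _ t) (hpos t ht.le)
  · intro s hs
    have h1 := VV_continuous_x d N (fun k => derivative (h k)) s
    have : ContinuousOn (fun x => VV d N h s x ^ a) (Icc (-1) 1) :=
      (VV_continuous_x d N h s).continuousOn.rpow_const fun x hx => Or.inl (hpos s hs.1 x hx).ne'
    fun_prop
  · have hr : ∀ b : ℝ, ContinuousOn (fun z : ℝ × ℝ => (Function.uncurry (VV d N h) z) ^ b)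
        (Icc 0 (t + 1) ×ˢ Icc (-1) 1) := fun b =>
      hc0.continuousOn.rpow_const fun z hz => Or.inl (hpos z.1 hz.1.1 z.2 hz.2).ne'
    exact ((((hcL.continuousOn.mul continuousOn_const).mul (hr (a - 1))).mul
      (hc1.continuousOn.pow 2)).add ((hr a).mul ((continuousOn_const.mul hc1.continuousOn).mul
        hcL1.continuousOn))).mul (by fun_prop)
  · intro s hs x hx
    refine ((((VV_hasDerivAt_t d N h s x).rpow_const (Or.inl (hpos s hs.1.le x hx).ne')).mul
      ((VV_hasDerivAt_t d N _ s x).pow 2)).mul_const _).congr_deriv ?_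
    norm_num

end flow

lemma VV_zero {d N : ℕ} {P : ℝ[X]} {h : ℕ → ℝ[X]} (H : Decomp d N P h) (x : ℝ) :
    VV d N h 0 x = P.eval x := by
  obtain ⟨-, -, -, hs⟩ := H
  rw [hs, eval_finsetSum]
  simp [VV]

lemma VV_deriv_zero {d N : ℕ} {P : ℝ[X]} {h : ℕ → ℝ[X]} (H : Decomp d N P h) (x : ℝ) :
    VV d N (fun k => derivative (h k)) 0 x = (derivative P).eval x := by
  obtain ⟨-, -, -, hs⟩ := H
  rw [hs, derivative_sum, eval_finsetSum]
  simp [VV]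

lemma eigen_integral {d : ℕ} (hd : 1 ≤ d) {g : ℝ[X]} {k : ℕ} (hk : k ≠ 0)
    (hg : Lop d g = (-lam d k) • g) : ∫ x, g.eval x ∂(nuMeas d) = 0 := by
  have ibp := nuMeas_ibp d hd (A := fun x => (derivative g).eval x)
    (A' := fun x => (derivative (derivative g)).eval x) (by fun_prop) (by fun_prop)
    (fun x _ => (derivative g).hasDerivAt x)
  have e : ∀ x : ℝ, (1 - x ^ 2) * (derivative (derivative g)).eval x - d * x * (derivative g).eval x
      = -lam d k * g.eval x := by
    intro x
    have := congrArg (eval x) hg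
    rw [Lop_apply] at this
    simp at this
    linarith
  simp only [e] at ibp
  rw [integral_const_mul] at ibp
  have := lam_strict d hd (Nat.pos_of_ne_zero hk)
  rw [lam_zero] at this
  rcases mul_eq_zero.1 ibp with h | h
  · linarith
  · exact h

lemma decomp_mean {d N : ℕ} (hd : 1 ≤ d) {P : ℝ[X]} {h : ℕ → ℝ[X]} (H : Decomp d (N + 1) P h) :
    ∃ c, h 0 = C c ∧ ∫ x, P.eval x ∂(nuMeas d) = c := by
  have := nuMeas_prob d hd
  obtain ⟨he, ⟨c, hc⟩, -, hs⟩ := H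
  refine ⟨c, hc, ?_⟩
  rw [hs]
  simp only [eval_finsetSum]
  rw [integral_finsetSum _ (fun i _ => nuMeas_integrable d hd (by fun_prop)),
    Finset.sum_range_succ']
  rw [Finset.sum_eq_zero (fun k _ => eigen_integral hd (Nat.succ_ne_zero k) (he _)), hc]
  simp

lemma VV_tendsto {d N : ℕ} (hd : 1 ≤ d) {h : ℕ → ℝ[X]} {c : ℝ} (hc : h 0 = C c) (x : ℝ) :
    Tendsto (fun t => VV d (N + 1) h t x) atTop (𝓝 c) := by
  unfold VV
  have : ∀ t : ℝ, ∑ k ∈ Finset.range (N + 1), Real.exp (-lam d k * t) * (h k).eval x =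
      ∑ k ∈ Finset.range N, Real.exp (-lam d (k + 1) * t) * (h (k + 1)).eval x + c := by
    intro t
    rw [Finset.sum_range_succ', hc, lam_zero]
    simp
  simp only [this]
  have h0 : Tendsto (fun t : ℝ => ∑ k ∈ Finset.range N, Real.exp (-lam d (k + 1) * t) * (h (k + 1)).eval x)
      atTop (𝓝 (∑ k ∈ Finset.range N, 0 * (h (k + 1)).eval x)) := by
    apply tendsto_finsetSum
    intro k _
    apply Tendsto.mul_const
    apply Real.tendsto_exp_atBot.comp
    have := lam_strict d hd (Nat.succ_pos k)
    rw [lam_zero] at this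
    exact tendsto_id.const_mul_atTop_of_neg (by simpa using this)
  simpa using h0.add_const c

lemma VV_bound {d N : ℕ} (hd : 1 ≤ d) (h : ℕ → ℝ[X]) {t : ℝ} (ht : 0 ≤ t) (x : ℝ) :
    VV d N h t x ≤ ∑ k ∈ Finset.range N, |(h k).eval x| := by
  unfold VV
  apply Finset.sum_le_sum
  intro k _
  have h1 : 0 ≤ lam d k := by
    rcases Nat.eq_zero_or_pos k with rfl | hk
    · rw [lam_zero]
    · have := lam_strict d hd hk
      rw [lam_zero] at this
      exact this.le
  have h2 : Real.exp (-lam d k * t) ≤ 1 := by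
    rw [Real.exp_le_one_iff]; nlinarith
  calc _ ≤ Real.exp (-lam d k * t) * |(h k).eval x| := by
        gcongr; exact le_abs_self _
    _ ≤ 1 * |(h k).eval x| := by gcongr
    _ = _ := one_mul _

lemma poly_ineq (d : ℕ) (hd : 1 ≤ d) (q : ℝ) (hq1 : 1 ≤ q) (hq2 : q ≤ 2) (P : ℝ[X])
    (hP : ∀ x ∈ Icc (-1 : ℝ) 1, 0 < P.eval x) :
    ∫ x, (P.eval x) ^ q ∂(nuMeas d) - (∫ x, P.eval x ∂(nuMeas d)) ^ q ≤
      q * (q - 1) / (2 * d) * ∫ x, (P.eval x) ^ (q - 2) * ((derivative P).eval x) ^ 2 * (1 - x ^ 2)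
        ∂(nuMeas d) := by
  have hd1 : (1 : ℝ) ≤ d := by exact_mod_cast hd
  obtain ⟨N, h, H⟩ := decomp_exists d hd P
  replace H := decomp_mono (Nat.le_succ N) H
  obtain ⟨c, hc, hmean⟩ := decomp_mean hd H
  obtain ⟨x₀, hx₀, hmin⟩ := isCompact_Icc.exists_isMinOn (s := Icc (-1 : ℝ) 1) ⟨0, by norm_num⟩
    (P.continuous.continuousOn)
  have hm0 := hP x₀ hx₀
  have hm : ∀ x ∈ Icc (-1 : ℝ) 1, P.eval x₀ ≤ VV d (N + 1) h 0 x := fun x hx => by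
    rw [VV_zero H]; exact hmin hx
  have he := H.1
  have hpos : ∀ t ≥ 0, ∀ x ∈ Icc (-1 : ℝ) 1, 0 < VV d (N + 1) h t x := fun t ht x hx =>
    hm0.trans_le (VV_min d (N + 1) h he hm ht hx)
  set E : ℝ → ℝ := fun t => ∫ x, (VV d (N + 1) h t x) ^ q ∂(nuMeas d) with hE
  set I : ℝ → ℝ := fun t => ∫ x, (VV d (N + 1) h t x) ^ (q - 2) *
        (VV d (N + 1) (fun k => derivative (h k)) t x) ^ 2 * (1 - x ^ 2) ∂(nuMeas d) with hI
  set K := q * (q - 1) / (2 * d) with hK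
  have hK0 : 0 ≤ K := by
    have : 0 ≤ q - 1 := by linarith
    positivity
  have hc0 := VV_continuous d (N + 1) h
  have hc1 := VV_continuous d (N + 1) (fun k => derivative (h k))
  have hI0 : ∀ t ≥ 0, 0 ≤ I t := by
    intro t ht
    apply integral_nonneg_of_ae
    filter_upwards [nuMeas_ae d] with x hx
    have h1 := hpos t ht x (Ioo_subset_Icc_self hx)
    have h2 := one_sub_sq_pos hx
    simp only [Pi.zero_apply]
    positivity
  have hstep : ∀ T > 0, E 0 - K * I 0 ≤ E T := by
    intro T hT
    have hr : ∀ b : ℝ, ContinuousOn (fun z : ℝ × ℝ => (Function.uncurry (VV d (N + 1) h) z) ^ b)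
        (Icc 0 T ×ˢ Icc (-1) 1) := fun b =>
      hc0.continuousOn.rpow_const fun z hz => Or.inl (hpos z.1 hz.1.1 z.2 hz.2).ne'
    have hEc : ContinuousOn E (Icc 0 T) := continuousOn_int d hd _ (hr q)
    have hIc : ContinuousOn I (Icc 0 T) := by
      apply continuousOn_int d hd
      exact ((hr (q - 2)).mul (hc1.continuousOn.pow 2)).mul (by fun_prop)
    have hmono : MonotoneOn (fun t => E t - K * I t) (Icc 0 T) := by
      have hder : ∀ t ∈ interior (Icc 0 T), ∃ D : ℝ, HasDerivAt (fun t => E t - K * I t) D t ∧ 0 ≤ D := by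
        intro t ht
        rw [interior_Icc] at ht
        obtain ⟨D, hD, hle⟩ := fisher_deriv hd he hm0 hm (q - 2) (by linarith) (by linarith) ht.1
        refine ⟨_, (entropy_deriv hd he hm0 hm q ht.1).sub (hD.const_mul K), ?_⟩
        have h1 := mul_le_mul_of_nonneg_left hle hK0
        have h2 : K * (2 * d) = q * (q - 1) := by rw [hK]; field_simp
        have h3 : K * (-(2 * (d : ℝ)) * I t) = - (q * (q - 1)) * I t := by rw [← h2]; ring
        change K * D ≤ K * (-(2 * (d : ℝ)) * I t) at h1
        change 0 ≤ - (q * (q - 1)) * I t - K * D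
        linarith
      apply monotoneOn_of_deriv_nonneg (convex_Icc _ _)
      · exact hEc.sub (continuousOn_const.mul hIc)
      · intro t ht
        obtain ⟨D, hD, -⟩ := hder t ht
        exact hD.differentiableAt.differentiableWithinAt
      · intro t ht
        obtain ⟨D, hD, h0⟩ := hder t ht
        rw [hD.deriv]; exact h0
    have := hmono ⟨le_rfl, hT.le⟩ ⟨hT.le, le_rfl⟩ hT.le
    simp only at this
    have := mul_nonneg hK0 (hI0 T hT.le)
    linarith
  have hlim : Tendsto E atTop (𝓝 (∫ _, c ^ q ∂(nuMeas d))) := by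
    apply tendsto_integral_filter_of_dominated_convergence
      (fun x => (∑ k ∈ Finset.range (N + 1), |(h k).eval x|) ^ q)
    · filter_upwards [eventually_ge_atTop 0] with t ht
      apply nuMeas_aesm d
      exact (VV_continuous_x d (N + 1) h t).continuousOn.rpow_const
        fun x hx => Or.inl (hpos t ht x hx).ne'
    · filter_upwards [eventually_ge_atTop 0] with t ht
      filter_upwards [nuMeas_ae d] with x hx
      have h1 := hpos t ht x (Ioo_subset_Icc_self hx)
      rw [Real.norm_of_nonneg (by positivity)]
      exact Real.rpow_le_rpow h1.le (VV_bound hd h ht x) (by linarith)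
    · apply nuMeas_integrable d hd
      apply Continuous.continuousOn
      apply Continuous.rpow_const (by fun_prop)
      intro x; right; linarith
    · filter_upwards [nuMeas_ae d] with x hx
      exact (VV_tendsto hd hc x).rpow_const (Or.inr (by linarith))
  have := nuMeas_prob d hd
  have hfin : E 0 - K * I 0 ≤ ∫ _, c ^ q ∂(nuMeas d) := by
    apply ge_of_tendsto hlim
    filter_upwards [eventually_gt_atTop 0] with T hT
    exact hstep T hT
  rw [hmean]
  simp only [hE, hI, VV_zero H, VV_deriv_zero H] at hfin
  simp at hfin
  linarith

lemma exists_antideriv (r : ℝ[X]) : ∃ Q : ℝ[X], derivative Q = r := by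
  induction r using Polynomial.induction_on' with
  | add p q hp hq =>
    obtain ⟨P, rfl⟩ := hp
    obtain ⟨Q, rfl⟩ := hq
    exact ⟨P + Q, derivative_add⟩
  | monomial n a =>
    refine ⟨monomial (n + 1) (a / (n + 1)), ?_⟩
    rw [derivative_monomial]
    have : ((n : ℝ) + 1) ≠ 0 := by positivity
    simp
    field_simp

lemma approx_C1 {g g' : ℝ → ℝ}
    (hg : ∀ x ∈ Icc (-1 : ℝ) 1, HasDerivWithinAt g (g' x) (Icc (-1) 1) x)
    (hg' : ContinuousOn g' (Icc (-1) 1)) {ε : ℝ} (hε : 0 < ε) :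
    ∃ P : ℝ[X], ∀ x ∈ Icc (-1 : ℝ) 1, |P.eval x - g x| ≤ ε ∧ |(derivative P).eval x - g' x| ≤ ε := by
  obtain ⟨r, hr⟩ := exists_polynomial_near_of_continuousOn (-1) 1 g' hg' (ε / 2) (by positivity)
  obtain ⟨Q, rfl⟩ := exists_antideriv r
  refine ⟨Q + C (g (-1) - Q.eval (-1)), fun x hx => ⟨?_, ?_⟩⟩
  · have h1 := Convex.norm_image_sub_le_of_norm_hasDerivWithin_le (f := fun x => Q.eval x - g x)
      (f' := fun x => (derivative Q).eval x - g' x) (C := ε / 2) (s := Icc (-1 : ℝ) 1)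
      (x := -1) (y := x)
      (fun y hy => ((Q.hasDerivAt y).hasDerivWithinAt).sub (hg y hy))
      (fun y hy => (hr y hy).le) (convex_Icc _ _) (by norm_num) hx
    have h2 : |x - -1| ≤ 2 := by rw [abs_le]; constructor <;> linarith [hx.1, hx.2]
    rw [Real.norm_eq_abs, Real.norm_eq_abs] at h1
    have e : (Q + C (g (-1) - Q.eval (-1))).eval x - g x
        = Q.eval x - g x - (Q.eval (-1) - g (-1)) := by simp; ring
    rw [e]
    nlinarith
  · have := (hr x hx).le
    simp
    linarith

lemma dct (d : ℕ) (hd : 1 ≤ d) {F : ℕ → ℝ → ℝ} {G : ℝ → ℝ} (C : ℝ)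
    (hF : ∀ n, ContinuousOn (F n) (Icc (-1) 1))
    (hb : ∀ n, ∀ x ∈ Icc (-1 : ℝ) 1, |F n x| ≤ C)
    (hl : ∀ x ∈ Icc (-1 : ℝ) 1, Tendsto (fun n => F n x) atTop (𝓝 (G x))) :
    Tendsto (fun n => ∫ x, F n x ∂(nuMeas d)) atTop (𝓝 (∫ x, G x ∂(nuMeas d))) := by
  have := nuMeas_prob d hd
  apply tendsto_integral_of_dominated_convergence (fun _ => C)
  · exact fun n => nuMeas_aesm d (hF n)
  · exact integrable_const C
  · intro n
    filter_upwards [nuMeas_ae d] with x hx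
    exact hb n x (Ioo_subset_Icc_self hx)
  · filter_upwards [nuMeas_ae d] with x hx
    exact hl x (Ioo_subset_Icc_self hx)

lemma C1_ineq (d : ℕ) (hd : 1 ≤ d) (q : ℝ) (hq1 : 1 ≤ q) (hq2 : q ≤ 2) {g g' : ℝ → ℝ}
    (hg : ∀ x ∈ Icc (-1 : ℝ) 1, HasDerivWithinAt g (g' x) (Icc (-1) 1) x)
    (hg' : ContinuousOn g' (Icc (-1) 1)) (hpos : ∀ x ∈ Icc (-1 : ℝ) 1, 0 < g x) :
    ∫ x, (g x) ^ q ∂(nuMeas d) - (∫ x, g x ∂(nuMeas d)) ^ q ≤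
      q * (q - 1) / (2 * d) * ∫ x, (g x) ^ (q - 2) * (g' x) ^ 2 * (1 - x ^ 2) ∂(nuMeas d) := by
  have hgc : ContinuousOn g (Icc (-1) 1) := fun x hx => (hg x hx).continuousWithinAt
  obtain ⟨x₀, hx₀, hmin⟩ := isCompact_Icc.exists_isMinOn (s := Icc (-1 : ℝ) 1) ⟨0, by norm_num⟩ hgc
  set m := g x₀ with hm
  have hm0 : 0 < m := hpos x₀ hx₀
  have hmin' : ∀ x ∈ Icc (-1 : ℝ) 1, m ≤ g x := fun x hx => hmin hx
  obtain ⟨M, hM⟩ := isCompact_Icc.exists_bound_of_continuousOn hgc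
  obtain ⟨M', hM'⟩ := isCompact_Icc.exists_bound_of_continuousOn hg'
  have hε : ∀ n : ℕ, 0 < (m / 2) * (1 / ((n : ℝ) + 1)) := fun n => by positivity
  choose P hP using fun n => approx_C1 hg hg' (hε n)
  have hle : ∀ n : ℕ, (m / 2) * (1 / ((n : ℝ) + 1)) ≤ m / 2 := fun n => by
    have : 1 / ((n : ℝ) + 1) ≤ 1 := by
      rw [div_le_one (by positivity)]; linarith [(Nat.cast_nonneg n : (0 : ℝ) ≤ n)]
    nlinarith
  have hlim0 : Tendsto (fun n : ℕ => (m / 2) * (1 / ((n : ℝ) + 1))) atTop (𝓝 0) := by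
    simpa using (tendsto_one_div_add_atTop_nhds_zero_nat (𝕜 := ℝ)).const_mul (m / 2)
  have hl : ∀ x ∈ Icc (-1 : ℝ) 1, Tendsto (fun n => (P n).eval x) atTop (𝓝 (g x)) := by
    intro x hx
    rw [tendsto_iff_norm_sub_tendsto_zero]
    exact squeeze_zero (fun _ => norm_nonneg _) (fun n => (hP n x hx).1) hlim0
  have hl' : ∀ x ∈ Icc (-1 : ℝ) 1, Tendsto (fun n => (derivative (P n)).eval x) atTop (𝓝 (g' x)) := by
    intro x hx
    rw [tendsto_iff_norm_sub_tendsto_zero]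
    exact squeeze_zero (fun _ => norm_nonneg _) (fun n => (hP n x hx).2) hlim0
  have hlow : ∀ n, ∀ x ∈ Icc (-1 : ℝ) 1, m / 2 ≤ (P n).eval x := by
    intro n x hx
    have := abs_le.1 ((hP n x hx).1.trans (hle n))
    linarith [hmin' x hx]
  have hPpos : ∀ n, ∀ x ∈ Icc (-1 : ℝ) 1, 0 < (P n).eval x := fun n x hx =>
    (half_pos hm0).trans_le (hlow n x hx)
  have hup : ∀ n, ∀ x ∈ Icc (-1 : ℝ) 1, (P n).eval x ≤ M + m / 2 := by
    intro n x hx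
    have := abs_le.1 ((hP n x hx).1.trans (hle n))
    have := abs_le.1 (hM x hx)
    linarith
  have hup' : ∀ n, ∀ x ∈ Icc (-1 : ℝ) 1, |(derivative (P n)).eval x| ≤ M' + m / 2 := by
    intro n x hx
    have := abs_le.1 ((hP n x hx).2.trans (hle n))
    have := abs_le.1 (hM' x hx)
    rw [abs_le]; constructor <;> linarith
  have hr : ∀ n, ∀ s : ℝ, ContinuousOn (fun x => (P n).eval x ^ s) (Icc (-1) 1) := fun n s =>
    (P n).continuous.continuousOn.rpow_const fun x hx => Or.inl (hPpos n x hx).ne'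
  have T1 := dct d hd (F := fun n x => (P n).eval x ^ q) (G := fun x => g x ^ q) ((M + m / 2) ^ q)
    (fun n => hr n q)
    (fun n x hx => by
      rw [abs_of_pos (Real.rpow_pos_of_pos (hPpos n x hx) _)]
      exact Real.rpow_le_rpow (hPpos n x hx).le (hup n x hx) (by linarith))
    (fun x hx => (hl x hx).rpow_const (Or.inl (hpos x hx).ne'))
  have T2 := dct d hd (F := fun n x => (P n).eval x) (G := g) (M + m / 2)
    (fun n => (P n).continuous.continuousOn)
    (fun n x hx => by
      rw [abs_of_pos (hPpos n x hx)]; exact hup n x hx) hl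
  have T3 := dct d hd (F := fun n x => (P n).eval x ^ (q - 2) * (derivative (P n)).eval x ^ 2 * (1 - x ^ 2))
    (G := fun x => g x ^ (q - 2) * g' x ^ 2 * (1 - x ^ 2)) ((m / 2) ^ (q - 2) * (M' + m / 2) ^ 2 * 1)
    (fun n => by
      have := hr n (q - 2)
      fun_prop)
    (fun n x hx => by
      have h1 := Real.rpow_pos_of_pos (hPpos n x hx) (q - 2)
      have h2 : 0 ≤ 1 - x ^ 2 := by nlinarith [hx.1, hx.2]
      have h3 : 1 - x ^ 2 ≤ 1 := by nlinarith
      have h4 : (derivative (P n)).eval x ^ 2 ≤ (M' + m / 2) ^ 2 := sq_le_sq' (abs_le.1 (hup' n x hx)).1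
        (abs_le.1 (hup' n x hx)).2
      have h5 := Real.rpow_le_rpow_of_nonpos (half_pos hm0) (hlow n x hx) (show q - 2 ≤ 0 by linarith)
      rw [abs_of_nonneg (by positivity)]
      gcongr)
    (fun x hx => (((hl x hx).rpow_const (Or.inl (hpos x hx).ne')).mul ((hl' x hx).pow 2)).mul_const _)
  exact le_of_tendsto_of_tendsto' (T1.sub (T2.rpow_const (Or.inr (by linarith))))
    (T3.const_mul (q * (q - 1) / (2 * d))) fun n => poly_ineq d hd q hq1 hq2 (P n) (hPpos n)

lemma reg_ineq (d : ℕ) (hd : 1 ≤ d) (p : ℝ) (hp1 : 1 ≤ p) (hp2 : p < 2) {f f' : ℝ → ℝ}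
    (hf : ∀ x ∈ Icc (-1 : ℝ) 1, HasDerivWithinAt f (f' x) (Icc (-1) 1) x)
    (hf' : ContinuousOn f' (Icc (-1) 1)) {e : ℝ} (he : 0 < e) :
    ∫ x, (f x ^ 2 + e) ∂(nuMeas d) - (∫ x, (f x ^ 2 + e) ^ (p / 2) ∂(nuMeas d)) ^ (2 / p) ≤
      (2 - p) / d * ∫ x, (f' x) ^ 2 * (1 - x ^ 2) ∂(nuMeas d) := by
  have hd1 : (1 : ℝ) ≤ d := by exact_mod_cast hd
  have hp0 : 0 < p := by linarith
  have hfc : ContinuousOn f (Icc (-1) 1) := fun x hx => (hf x hx).continuousWithinAt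
  have hb : ∀ x, 0 < f x ^ 2 + e := fun x => by positivity
  have hr : ∀ s : ℝ, ContinuousOn (fun x => (f x ^ 2 + e) ^ s) (Icc (-1) 1) := fun s =>
    ContinuousOn.rpow_const (by fun_prop) fun x _ => Or.inl (hb x).ne'
  have r1 := hr (p / 2 - 1)
  have main := C1_ineq d hd (2 / p) (by rw [le_div_iff₀ hp0]; linarith)
    (by rw [div_le_iff₀ hp0]; linarith) (g := fun x => (f x ^ 2 + e) ^ (p / 2))
    (g' := fun x => (2 * f x * f' x) * (p / 2) * (f x ^ 2 + e) ^ (p / 2 - 1))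
    (fun x hx => by
      have h1 : HasDerivWithinAt (fun x => f x ^ 2 + e) (2 * f x * f' x) (Icc (-1) 1) x := by
        simpa using ((hf x hx).pow 2).add_const e
      exact h1.rpow_const (Or.inl (hb x).ne'))
    (by fun_prop) (fun x _ => Real.rpow_pos_of_pos (hb x) _)
  have e1 : ∀ x, ((f x ^ 2 + e) ^ (p / 2)) ^ (2 / p) = f x ^ 2 + e := fun x => by
    rw [← Real.rpow_mul (hb x).le, show p / 2 * (2 / p) = 1 by field_simp, Real.rpow_one]
  simp only [e1] at main
  refine main.trans ?_
  have e2 : ∀ x, ((f x ^ 2 + e) ^ (p / 2)) ^ (2 / p - 2) *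
      ((2 * f x * f' x) * (p / 2) * (f x ^ 2 + e) ^ (p / 2 - 1)) ^ 2 * (1 - x ^ 2)
      = p ^ 2 * (f x ^ 2 / (f x ^ 2 + e) * (f' x ^ 2 * (1 - x ^ 2))) := fun x => by
    have h1 : ((f x ^ 2 + e) ^ (p / 2)) ^ (2 / p - 2) * ((f x ^ 2 + e) ^ (p / 2 - 1)) ^ 2
        = (f x ^ 2 + e)⁻¹ := by
      have hbx := hb x
      generalize f x ^ 2 + e = b at hbx ⊢
      rw [← Real.rpow_mul hbx.le, ← Real.rpow_natCast, ← Real.rpow_mul hbx.le,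
        ← Real.rpow_add hbx, ← Real.rpow_neg_one]
      congr 1
      push_cast
      field_simp
      ring
    rw [div_eq_mul_inv (f x ^ 2), ← h1]
    ring
  simp only [e2]
  rw [integral_const_mul, ← mul_assoc]
  have e3 : 2 / p * (2 / p - 1) / (2 * d) * p ^ 2 = (2 - p) / d := by field_simp
  rw [e3]
  apply mul_le_mul_of_nonneg_left _ (div_nonneg (by linarith) (by positivity))
  apply integral_mono_ae
  · apply nuMeas_integrable d hd
    apply ContinuousOn.mul _ (by fun_prop)
    exact ContinuousOn.div (by fun_prop) (by fun_prop) fun x _ => (hb x).ne'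
  · exact nuMeas_integrable d hd (by fun_prop)
  · filter_upwards [nuMeas_ae d] with x hx
    have h1 : f x ^ 2 / (f x ^ 2 + e) ≤ 1 := by
      rw [div_le_one (hb x)]; linarith
    have h2 := one_sub_sq_pos hx
    have h3 : 0 ≤ f' x ^ 2 * (1 - x ^ 2) := by positivity
    simpa using mul_le_mul_of_nonneg_right h1 h3

theorem ultraspherical_subcritical (d : ℕ) (hd : 1 ≤ d) (p : ℝ) (hp1 : 1 ≤ p) (hp2 : p < 2)
    (f : ℝ → ℝ) (hf : ContDiffOn ℝ 1 f (Set.Icc (-1 : ℝ) 1)) :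
    ∫ x, (deriv f x) ^ 2 * (1 - x ^ 2) ∂(nuMeas d) ≥
      d * (((∫ x, |f x| ^ (2 : ℝ) ∂(nuMeas d)) -
        (∫ x, |f x| ^ p ∂(nuMeas d)) ^ (2 / p)) / (2 - p)) := by
  have hd1 : (1 : ℝ) ≤ d := by exact_mod_cast hd
  have hud : UniqueDiffOn ℝ (Icc (-1 : ℝ) 1) := uniqueDiffOn_Icc (by norm_num)
  set f' := derivWithin f (Icc (-1) 1) with hf'
  have hder : ∀ x ∈ Icc (-1 : ℝ) 1, HasDerivWithinAt f (f' x) (Icc (-1) 1) x := fun x hx =>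
    (hf.differentiableOn (by norm_num) x hx).hasDerivWithinAt
  have hf'c : ContinuousOn f' (Icc (-1) 1) := hf.continuousOn_derivWithin hud le_rfl
  have hfc := hf.continuousOn
  have ed : ∫ x, (deriv f x) ^ 2 * (1 - x ^ 2) ∂(nuMeas d) =
      ∫ x, (f' x) ^ 2 * (1 - x ^ 2) ∂(nuMeas d) := by
    apply integral_congr_ae
    filter_upwards [nuMeas_ae d] with x hx
    rw [((hder x (Ioo_subset_Icc_self hx)).hasDerivAt (Icc_mem_nhds hx.1 hx.2)).deriv]
  have e1 : ∀ x, |f x| ^ (2 : ℝ) = f x ^ 2 + 0 := fun x => by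
    rw [add_zero, ← sq_abs, ← Real.rpow_natCast]; norm_num
  have e2 : ∀ x, |f x| ^ p = (f x ^ 2 + 0) ^ (p / 2) := fun x => by
    rw [← e1, ← Real.rpow_mul (abs_nonneg _)]; congr 1; ring
  rw [ed]
  simp only [e1, e2]
  obtain ⟨M, hM⟩ := isCompact_Icc.exists_bound_of_continuousOn hfc
  have hlim0 := tendsto_one_div_add_atTop_nhds_zero_nat (𝕜 := ℝ)
  have hle : ∀ n : ℕ, 1 / ((n : ℝ) + 1) ≤ 1 := fun n => by
    rw [div_le_one (by positivity)]; linarith [(Nat.cast_nonneg n : (0 : ℝ) ≤ n)]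
  have hsq : ∀ n : ℕ, ∀ x ∈ Icc (-1 : ℝ) 1, f x ^ 2 + 1 / ((n : ℝ) + 1) ≤ M ^ 2 + 1 := by
    intro n x hx
    have h1 := abs_le.1 (hM x hx)
    have := sq_le_sq' h1.1 h1.2
    linarith [hle n]
  have hpos : ∀ n : ℕ, ∀ x, 0 < f x ^ 2 + 1 / ((n : ℝ) + 1) := fun n x => by positivity
  have T1 := dct d hd (F := fun n x => f x ^ 2 + 1 / ((n : ℝ) + 1)) (G := fun x => f x ^ 2 + 0)
    (M ^ 2 + 1) (fun n => by fun_prop)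
    (fun n x hx => by rw [abs_of_pos (hpos n x)]; exact hsq n x hx)
    (fun x _ => hlim0.const_add _)
  have T2 := dct d hd (F := fun n x => (f x ^ 2 + 1 / ((n : ℝ) + 1)) ^ (p / 2))
    (G := fun x => (f x ^ 2 + 0) ^ (p / 2))
    ((M ^ 2 + 1) ^ (p / 2))
    (fun n => ContinuousOn.rpow_const (by fun_prop) fun x _ => Or.inl (hpos n x).ne')
    (fun n x hx => by
      rw [abs_of_pos (Real.rpow_pos_of_pos (hpos n x) _)]
      exact Real.rpow_le_rpow (hpos n x).le (hsq n x hx) (by linarith))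
    (fun x _ => (hlim0.const_add _).rpow_const (Or.inr (by linarith)))
  have key := le_of_tendsto' (T1.sub (T2.rpow_const (p := 2 / p) (Or.inr (by positivity)))) fun n =>
    reg_ineq d hd p hp1 hp2 hder hf'c (e := 1 / ((n : ℝ) + 1)) (by positivity)
  have h2p : 0 < 2 - p := by linarith
  rw [ge_iff_le, ← mul_div_assoc, div_le_iff₀ h2p]
  calc _ ≤ (d : ℝ) * ((2 - p) / d * ∫ x, (f' x) ^ 2 * (1 - x ^ 2) ∂(nuMeas d)) := by
        gcongr
    _ = _ := by field_simp
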